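/- arXiv:1804.10802 — 2 statements merged into one kernel-verified Lean document; each statement's English description precedes it below -/
import Mathlib

section
/- Let α be a type and A, B lists over α. Define operations on triples of lists by L_⊕(X,Y,Z) = (X, X⊕Y, Y) and R_⊕(X,Y,Z) = (Y, Y⊕Z, Z), and define a family of triples V(j) for j ≥ 2 by V(2) = (A, A⊕B, B), V(2j−1) = L_⊕(V(j)) and V(2j) = R_⊕(V(j)) for j ≥ 2. Then for every j ≥ 2, V(j) = ( S_{A,B}(a*(j−1)), S_{A,B}(j), S_{A,B}(a(j)) ); in particular, the central component of V(j) equals S_{A,B}(j). -/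
/-- Stern's diatomic sequence. -/
def stern : ℕ → ℕ
  | 0 => 0
  | 1 => 1
  | n + 2 =>
    if (n + 2) % 2 = 0 then stern ((n + 2) / 2)
    else stern ((n + 2) / 2) + stern ((n + 2) / 2 + 1)
decreasing_by all_goals omega

/-- OEIS A003602: a(1)=1, a(2n)=a(n), a(2n+1)=n+1. (a(0)=0 as junk value.) -/
def aseq : ℕ → ℕ
  | 0 => 0
  | 1 => 1
  | n + 2 =>
    if (n + 2) % 2 = 0 then aseq ((n + 2) / 2)
    else (n + 2) / 2 + 1
decreasing_by all_goals omega

-- the modified sequence `a*`: zero at powers of two.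
open Classical in
noncomputable def aStar (j : ℕ) : ℕ :=
  if ∃ k, j = 2 ^ k then 0 else aseq j

theorem aseq_le (n : ℕ) : aseq n ≤ n := by
  induction n using Nat.strong_induction_on with
  | _ n ih =>
    match n with
    | 0 => simp [aseq]
    | 1 => simp [aseq]
    | m + 2 =>
      rw [aseq]
      split
      · exact le_trans (ih ((m + 2) / 2) (by omega)) (by omega)
      · omega

theorem aStar_le (j : ℕ) : aStar j ≤ j := by
  unfold aStar
  split
  · omega
  · exact aseq_le j

/-- The Markov-type sequence `S_{A,B}(n)`. -/
noncomputable def mseq {α : Type*} (A B : List α) : ℕ → List α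
  | 0 => A
  | 1 => B
  | 2 => A ++ B
  | n + 3 =>
    if (n + 3) % 2 = 0 then
      mseq A B ((n + 3) / 2) ++ mseq A B (aseq ((n + 3) / 2))
    else
      mseq A B (aStar ((n + 4) / 2 - 1)) ++ mseq A B ((n + 4) / 2)
decreasing_by
  all_goals first
    | omega
    | exact lt_of_le_of_lt (aseq_le _) (by omega)
    | exact lt_of_le_of_lt (aStar_le _) (by omega)

def Lop {α : Type*} (v : List α × List α × List α) : List α × List α × List α :=
  (v.1, v.1 ++ v.2.1, v.2.1)

def Rop {α : Type*} (v : List α × List α × List α) : List α × List α × List α :=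
  (v.2.1, v.2.1 ++ v.2.2, v.2.2)

/-- The family of triples `V(j)` generated from `(A, A ⊕ B, B)` by the `L`/`R` moves. -/
def Vtrip {α : Type*} (A B : List α) : ℕ → List α × List α × List α
  | 0 => ([], [], [])
  | 1 => ([], [], [])
  | 2 => (A, A ++ B, B)
  | n + 3 =>
    if (n + 3) % 2 = 0 then Rop (Vtrip A B ((n + 3) / 2))
    else Lop (Vtrip A B ((n + 4) / 2))
decreasing_by all_goals omega

theorem aseq_even (m : ℕ) : aseq (2 * m) = aseq m := by
  rcases m with _ | m
  · rfl
  · rw [show 2 * (m + 1) = 2 * m + 2 by ring, aseq, if_pos (by omega)]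
    congr 1
    omega

theorem aseq_odd (m : ℕ) (hm : 1 ≤ m) : aseq (2 * m + 1) = m + 1 := by
  obtain ⟨m, rfl⟩ := Nat.exists_eq_add_of_le' hm
  rw [show 2 * (m + 1) + 1 = (2 * m + 1) + 2 by ring, aseq, if_neg (by omega)]
  omega

theorem aStar_even (m : ℕ) : aStar (2 * m) = aStar m := by
  have h : (∃ k, 2 * m = 2 ^ k) ↔ ∃ k, m = 2 ^ k := by
    constructor
    · rintro ⟨k, hk⟩
      rcases k with _ | k
      · simp at hk
      · exact ⟨k, by rw [pow_succ] at hk; omega⟩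
    · rintro ⟨k, rfl⟩
      exact ⟨k + 1, by ring⟩
  unfold aStar
  rw [aseq_even]
  by_cases hm : ∃ k, m = 2 ^ k
  · rw [if_pos hm, if_pos (h.2 hm)]
  · rw [if_neg hm, if_neg (fun h0 => hm (h.1 h0))]

theorem aStar_odd (m : ℕ) (hm : 1 ≤ m) : aStar (2 * m + 1) = m + 1 := by
  unfold aStar
  rw [if_neg, aseq_odd m hm]
  rintro ⟨k, hk⟩
  rcases k with _ | k
  · simp at hk; omega
  · rw [pow_succ] at hk; omega

/-- for every `j ≥ 2`,
`V(j) = (S_{A,B}(a*(j−1)), S_{A,B}(j), S_{A,B}(a(j)))`. -/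
theorem stmt4 {α : Type*} (A B : List α) (j : ℕ) (hj : 2 ≤ j) :
    Vtrip A B j = (mseq A B (aStar (j - 1)), mseq A B j, mseq A B (aseq j)) := by
  induction j using Nat.strong_induction_on with
  | _ j ih =>
    match j, hj with
    | 2, _ =>
      have h1 : aStar 1 = 0 := by
        unfold aStar
        exact if_pos ⟨0, by simp⟩
      have h2 : aseq 2 = 1 := by simp [aseq]
      simp [Vtrip, h1, h2, mseq]
    | n + 3, _ =>
      rw [Vtrip, mseq]
      rcases Nat.even_or_odd' n with ⟨m, rfl | rfl⟩
      · rw [if_neg (by omega), if_neg (by omega), show (2 * m + 4) / 2 = m + 2 by omega,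
          ih (m + 2) (by omega) (by omega), show 2 * m + 3 - 1 = 2 * (m + 1) by omega,
          aStar_even, show 2 * m + 3 = 2 * (m + 1) + 1 by ring, aseq_odd _ (by omega)]
        rfl
      · rw [if_pos (by omega), if_pos (by omega), show (2 * m + 1 + 3) / 2 = m + 2 by omega,
          ih (m + 2) (by omega) (by omega), show 2 * m + 1 + 3 - 1 = 2 * (m + 1) + 1 by omega,
          aStar_odd _ (by omega), show 2 * m + 1 + 3 = 2 * (m + 2) by ring, aseq_even]
        rfl
end

section
/- Let α be a type and let A, B be lists over α, both of length 2. Let i ≥ 2 and m ≥ 1 be integers and set k = 2^i·m − 2^{i−1} + 1 (an odd integer; this corresponds to the chain k_1 = k, k_{j} = (k_{j−1}+1)/2 ending at the first even value k_i = 2m, with k_{i+1} = m). Then |S_{A,B}(m)| = 2 · d(k−1), where d is Stern's diatomic sequence. -/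
theorem stern_even (n : ℕ) : stern (2 * n) = stern n := by
  rcases n with _ | n
  · rfl
  · rw [show 2 * (n + 1) = 2 * n + 2 by ring, stern, if_pos (by omega)]
    congr 1; omega

theorem stern_odd (n : ℕ) (h : 1 ≤ n) : stern (2 * n + 1) = stern n + stern (n + 1) := by
  obtain ⟨n, rfl⟩ := Nat.exists_eq_add_of_le' h
  rw [show 2 * (n + 1) + 1 = (2 * n + 1) + 2 by ring, stern, if_neg (by omega)]
  rw [show (2 * n + 1 + 2) / 2 = n + 1 by omega]

theorem stern_pow (k n : ℕ) : stern (2 ^ k * n) = stern n := by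
  induction k with
  | zero => simp
  | succ k ih => rw [pow_succ', mul_assoc, stern_even, ih]

theorem aseq_spec (n : ℕ) (h : 1 ≤ n) :
    1 ≤ aseq n ∧ stern (2 * aseq n - 1) = stern n := by
  induction n using Nat.strong_induction_on with
  | _ n ih =>
    match n with
    | 0 => omega
    | 1 => simp [aseq]
    | m + 2 =>
      rw [aseq]
      split
      · obtain ⟨h1, h2⟩ := ih ((m + 2) / 2) (by omega) (by omega)
        refine ⟨h1, ?_⟩
        rw [h2, ← stern_even]
        congr 1; omega
      · refine ⟨by omega, ?_⟩
        congr 1; omega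

theorem mseq_len {α : Type*} (A B : List α) (hA : A.length = 2) (hB : B.length = 2)
    (m : ℕ) (hm : 1 ≤ m) : (mseq A B m).length = 2 * stern (2 * m - 1) := by
  induction m using Nat.strong_induction_on with
  | _ m ih =>
    match m with
    | 0 => omega
    | 1 => simp [mseq, stern, hB]
    | 2 => simp [mseq, stern, hA, hB]
    | n + 3 =>
      rw [mseq]
      split
      · obtain ⟨j, hj⟩ : ∃ j, n + 3 = 2 * j := ⟨(n + 3) / 2, by omega⟩
        rw [show (n + 3) / 2 = j by omega]
        obtain ⟨h1, h2⟩ := aseq_spec j (by omega)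
        have h3 := aseq_le j
        rw [List.length_append, ih j (by omega) (by omega), ih (aseq j) (by omega) h1, h2,
          show 2 * (n + 3) - 1 = 2 * (2 * j - 1) + 1 by omega, stern_odd _ (by omega),
          show 2 * j - 1 + 1 = 2 * j by omega, stern_even j]
        ring
      · obtain ⟨j, hj⟩ : ∃ j, n + 3 = 2 * j + 1 := ⟨(n + 3) / 2, by omega⟩
        rw [show (n + 4) / 2 = j + 1 by omega, Nat.add_sub_cancel]
        have h4 : (mseq A B (aStar j)).length = 2 * stern j := by
          unfold aStar
          split
          · rename_i h
            obtain ⟨k, rfl⟩ := h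
            have := stern_pow k 1
            rw [mul_one] at this
            simp [mseq, hA, this, stern]
          · obtain ⟨h1, h2⟩ := aseq_spec j (by omega)
            have h3 := aseq_le j
            rw [ih (aseq j) (by omega) h1, h2]
        rw [List.length_append, h4, ih (j + 1) (by omega) (by omega),
          show 2 * (n + 3) - 1 = 2 * (2 * j) + 1 by omega, stern_odd _ (by omega),
          stern_even j, show 2 * (j + 1) - 1 = 2 * j + 1 by omega]
        ring

/-- for `A`, `B` of length 2, `i ≥ 2`, `m ≥ 1` and
`k = 2^i·m − 2^{i−1} + 1`, one has `|S_{A,B}(m)| = 2·d(k−1)`. -/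
theorem stmt8 {α : Type*} (A B : List α) (hA : A.length = 2) (hB : B.length = 2)
    (i m : ℕ) (hi : 2 ≤ i) (hm : 1 ≤ m) :
    (mseq A B m).length = 2 * stern ((2 ^ i * m - 2 ^ (i - 1) + 1) - 1) := by
  obtain ⟨i, rfl⟩ := Nat.exists_eq_add_of_le' hi
  rw [mseq_len A B hA hB m hm, Nat.add_sub_cancel, show i + 2 - 1 = i + 1 by omega,
    show 2 ^ (i + 2) * m - 2 ^ (i + 1) = 2 ^ (i + 1) * (2 * m - 1) by
      rw [Nat.mul_sub, pow_succ 2 (i + 1), mul_one, mul_assoc], stern_pow]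
end
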